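/- Let σ, λ > 0 with λ > σ, ω(x) = (σ√(2π))^{-1} exp(−(x²/2)(σ^{−2} − λ^{−2})) on ℝ, and κ_a(x) = exp(−a|x|) for a > 0, and let α ≥ 1. Then: (i) ‖κ_a^{1/α}‖_{L_1(ℝ)} = 2α/a; (ii) ‖ω/κ_a‖_{L_∞(ℝ)} = (σ√(2π))^{-1} exp(a²/(2(σ^{−2} − λ^{−2}))); (iii) the quantity ‖κ_a^{1/α}‖_{L_1(ℝ)}^α · ‖ω/κ_a‖_{L_∞(ℝ)} is minimized over a > 0 at a_* = √(α(σ^{−2} − λ^{−2})); and (iv) with the minimizer a_*, (‖κ_{a_*}^{1/α}‖_{L_1}^α / ‖ω^{1/α}‖_{L_1}^α)·‖ω/κ_{a_*}‖_{L_∞} = (2e/π)^{α/2}, a value independent of σ and λ. -/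

import Mathlib

open MeasureTheory Real Set
open scoped ENNReal

theorem integral_exp_neg_mul_abs {b : ℝ} (hb : 0 < b) :
    ∫ x : ℝ, exp (-(b * |x|)) = 2 / b := by
  rw [integral_comp_abs (f := fun x => exp (-(b * x)))]
  have h := integral_exp_mul_Ioi (a := -b) (by linarith) 0
  simp only [neg_mul, mul_zero, exp_zero, neg_div_neg_eq] at h
  rw [h]
  ring

theorem eLpNorm_top_eq_enorm_of_forall_norm_le {f : ℝ → ℝ} (hf : Continuous f) {x₀ : ℝ}
    (hx₀ : ∀ x, ‖f x‖ ≤ ‖f x₀‖) : eLpNorm f ⊤ volume = ‖f x₀‖ₑ := by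
  rw [eLpNorm_exponent_top]
  refine le_antisymm ?_ ?_
  · exact eLpNormEssSup_le_of_ae_enorm_bound (.of_forall fun x => enorm_le_iff_norm_le.2 (hx₀ x))
  · have hdense := Measure.dense_of_ae (enorm_ae_le_eLpNormEssSup f volume)
    have hclosed : IsClosed {x | ‖f x‖ₑ ≤ eLpNormEssSup f volume} :=
      isClosed_le hf.enorm continuous_const
    have : x₀ ∈ closure {x | ‖f x‖ₑ ≤ eLpNormEssSup f volume} := hdense x₀
    rwa [hclosed.closure_eq] at this

theorem eLpNorm_top_gaussian_div_exp {c s a : ℝ} (hc : 0 ≤ c) (hs : 0 < s) (ha : 0 ≤ a) :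
    eLpNorm (fun x : ℝ => c * exp (-(x ^ 2 / 2) * s) / exp (-(a * |x|))) ⊤ volume
      = ENNReal.ofReal (c * exp (a ^ 2 / (2 * s))) := by
  have hrw (x : ℝ) : c * exp (-(x ^ 2 / 2) * s) / exp (-(a * |x|))
      = c * exp (a ^ 2 / (2 * s) - s / 2 * (|x| - a / s) ^ 2) := by
    rw [mul_div_assoc, ← exp_sub]
    congr 2
    rw [← sq_abs x]
    field_simp
    ring
  simp_rw [hrw]
  rw [eLpNorm_top_eq_enorm_of_forall_norm_le (x₀ := a / s) (by fun_prop)]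
  · rw [abs_of_nonneg (by positivity), sub_self, enorm_of_nonneg (by positivity)]
    simp
  · intro x
    rw [norm_of_nonneg (by positivity), norm_of_nonneg (by positivity),
      abs_of_nonneg (a := a / s) (by positivity)]
    gcongr c * exp (_ - ?_)
    rw [sub_self, zero_pow two_ne_zero, mul_zero]
    positivity

theorem integral_gaussian_rpow {c s α : ℝ} (hc : 0 ≤ c) (hs : 0 < s) (hα : 0 < α) :
    (∫ x : ℝ, (c * exp (-(x ^ 2 / 2) * s)) ^ (1 / α)) ^ α
      = c * (2 * π * α / s) ^ (α / 2) := by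
  have hrw (x : ℝ) : (c * exp (-(x ^ 2 / 2) * s)) ^ (1 / α)
      = c ^ (1 / α) * exp (-(s / (2 * α)) * x ^ 2) := by
    rw [mul_rpow hc (exp_pos _).le, ← exp_mul]
    congr 2
    field_simp
  simp_rw [hrw]
  rw [integral_const_mul, integral_gaussian, mul_rpow (by positivity) (by positivity),
    ← rpow_mul hc, one_div_mul_cancel hα.ne', rpow_one, sqrt_eq_rpow, ← rpow_mul (by positivity)]
  congr 2
  · field_simp
  · ring

/-- The left-hand side is the minimum over `a` of the right-hand side, attained at `√(α s)`. -/
theorem rpow_mul_exp_sq_min {s α a : ℝ} (hs : 0 < s) (hα : 0 < α) (ha : 0 < a) :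
    (2 * α / √(α * s)) ^ α * exp (√(α * s) ^ 2 / (2 * s))
      ≤ (2 * α / a) ^ α * exp (a ^ 2 / (2 * s)) := by
  have hb : 0 < √(α * s) := by positivity
  rw [rpow_def_of_pos (by positivity), rpow_def_of_pos (by positivity), ← exp_add, ← exp_add,
    exp_le_exp, sq_sqrt (by positivity), log_div (by positivity) hb.ne',
    log_div (by positivity) ha.ne', log_sqrt (by positivity)]
  have hlog := log_le_sub_one_of_pos (x := a ^ 2 / (α * s)) (by positivity)
  rw [log_div (by positivity) (by positivity), log_pow] at hlog
  have h1 : α * s / (2 * s) = α / 2 := by field_simp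
  have h2 : a ^ 2 / (2 * s) = α / 2 * (a ^ 2 / (α * s)) := by field_simp
  rw [h1, h2]
  push_cast at hlog
  nlinarith [mul_le_mul_of_nonneg_left hlog (half_pos hα).le]

theorem rpow_div_rpow_mul_exp_eq {s α : ℝ} (hs : 0 < s) (hα : 0 < α) :
    (2 * α / √(α * s)) ^ α / (2 * π * α / s) ^ (α / 2) * exp (√(α * s) ^ 2 / (2 * s))
      = (2 * exp 1 / π) ^ (α / 2) := by
  have hsq : (2 * α / √(α * s)) ^ α = (4 * α / s) ^ (α / 2) := by
    have h : 2 * α / √(α * s) = √(4 * α / s) := by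
      rw [eq_comm, sqrt_eq_iff_mul_self_eq (by positivity) (by positivity),
        div_mul_div_comm, mul_self_sqrt (by positivity)]
      field_simp
      ring
    rw [h, sqrt_eq_rpow, ← rpow_mul (by positivity)]
    ring_nf
  have hexp : exp (√(α * s) ^ 2 / (2 * s)) = exp 1 ^ (α / 2) := by
    rw [← exp_mul, sq_sqrt (by positivity)]
    congr 1
    field_simp
  rw [hsq, hexp, ← div_rpow (by positivity) (by positivity),
    ← mul_rpow (by positivity) (by positivity)]
  congr 1
  field_simp
  norm_num

/-- Gaussian-ratio weight `ω(x) = (σ√(2π))⁻¹ exp(−(x²/2)(σ⁻² − λ⁻²))`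
(`λ > σ > 0`) and exponential quantizer `κ_a(x) = e^{−a|x|}`, `α ≥ 1`:
(i) `‖κ_a^{1/α}‖_{L₁(ℝ)} = 2α/a`;
(ii) `‖ω/κ_a‖_{L_∞(ℝ)} = (σ√(2π))⁻¹ exp(a²/(2(σ⁻² − λ⁻²)))`;
(iii) `a ↦ ‖κ_a^{1/α}‖₁^α ‖ω/κ_a‖_∞` is minimized over `a > 0` at
`a⋆ = √(α(σ⁻² − λ⁻²))`;
(iv) `(‖κ_{a⋆}^{1/α}‖₁^α/‖ω^{1/α}‖₁^α) ‖ω/κ_{a⋆}‖_∞ = (2e/π)^{α/2}`. -/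
theorem stmt_11 (σ lam : ℝ) (hσ : 0 < σ) (hlam : 0 < lam) (hσlam : σ < lam)
    (α : ℝ) (hα : 1 ≤ α) (ω : ℝ → ℝ) (κ : ℝ → ℝ → ℝ) (astar : ℝ)
    (hω : ω = fun x : ℝ =>
      (σ * Real.sqrt (2 * π))⁻¹ * Real.exp (-(x ^ 2 / 2) * ((σ ^ 2)⁻¹ - (lam ^ 2)⁻¹)))
    (hκ : κ = fun (a x : ℝ) => Real.exp (-(a * |x|)))
    (hastar : astar = Real.sqrt (α * ((σ ^ 2)⁻¹ - (lam ^ 2)⁻¹))) :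
    (∀ a : ℝ, 0 < a → ∫ x : ℝ, κ a x ^ (1 / α) = 2 * α / a)
    ∧ (∀ a : ℝ, 0 < a →
        eLpNorm (fun x => ω x / κ a x) ⊤ volume
          = ENNReal.ofReal
              ((σ * Real.sqrt (2 * π))⁻¹
                * Real.exp (a ^ 2 / (2 * ((σ ^ 2)⁻¹ - (lam ^ 2)⁻¹)))))
    ∧ (∀ a : ℝ, 0 < a →
        ENNReal.ofReal ((∫ x : ℝ, κ astar x ^ (1 / α)) ^ α)
            * eLpNorm (fun x => ω x / κ astar x) ⊤ volume
          ≤ ENNReal.ofReal ((∫ x : ℝ, κ a x ^ (1 / α)) ^ α)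
              * eLpNorm (fun x => ω x / κ a x) ⊤ volume)
    ∧ ENNReal.ofReal
          ((∫ x : ℝ, κ astar x ^ (1 / α)) ^ α / (∫ x : ℝ, ω x ^ (1 / α)) ^ α)
          * eLpNorm (fun x => ω x / κ astar x) ⊤ volume
        = ENNReal.ofReal ((2 * Real.exp 1 / π) ^ (α / 2)) := by
  have hα₀ : 0 < α := by linarith
  have hs : 0 < (σ ^ 2)⁻¹ - (lam ^ 2)⁻¹ :=
    sub_pos.2 (inv_strictAnti₀ (by positivity) (by gcongr))
  have hc : 0 < (σ * √(2 * π))⁻¹ := by positivity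
  generalize (σ ^ 2)⁻¹ - (lam ^ 2)⁻¹ = s at *
  generalize (σ * √(2 * π))⁻¹ = c at *
  have hastar₀ : 0 < astar := by rw [hastar]; positivity
  have hint (a : ℝ) (ha : 0 < a) : ∫ x : ℝ, κ a x ^ (1 / α) = 2 * α / a := by
    have hrw (x : ℝ) : κ a x ^ (1 / α) = exp (-(a / α * |x|)) := by
      rw [hκ, ← exp_mul]
      congr 1
      ring
    simp_rw [hrw]
    rw [integral_exp_neg_mul_abs (by positivity)]
    field_simp
  have hsup (a : ℝ) (ha : 0 < a) : eLpNorm (fun x => ω x / κ a x) ⊤ volume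
      = ENNReal.ofReal (c * exp (a ^ 2 / (2 * s))) := by
    rw [hω, hκ]
    exact eLpNorm_top_gaussian_div_exp hc.le hs ha.le
  refine ⟨hint, hsup, fun a ha => ?_, ?_⟩
  · rw [hint _ hastar₀, hint a ha, hsup _ hastar₀, hsup a ha,
      ← ENNReal.ofReal_mul (by positivity), ← ENNReal.ofReal_mul (by positivity),
      mul_left_comm, mul_left_comm _ c, hastar]
    gcongr ENNReal.ofReal (c * ?_)
    exact rpow_mul_exp_sq_min hs hα₀ ha
  · rw [hint _ hastar₀, hsup _ hastar₀, hω, integral_gaussian_rpow hc.le hs hα₀,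
      ← ENNReal.ofReal_mul (by positivity), ← rpow_div_rpow_mul_exp_eq hs hα₀, hastar]
    congr 1
    field_simp
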